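/- Consider the Hamiltonian system q̇ = p/√(1 + |p|²), ṗ = −∇Φ(t,q) − ∂ₜA(t,q) + q̇ × (∇×A)(t,q), where A ∈ C¹(ℝ⁴;ℝ³) and Φ is C¹ with C := max{‖∂ₜA‖_∞, ‖∇A‖_∞, ‖∇Φ‖_∞} < ∞. Then every T-periodic solution (q,p) satisfies |q̇(t)| ≤ TC/√(1 + T²C²) < 1 for all t. -/

import Mathlib

noncomputable section

/-- Cross product on `ℝ³` (with the Euclidean norm). -/
def cross3 (u v : EuclideanSpace ℝ (Fin 3)) : EuclideanSpace ℝ (Fin 3) :=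
  (WithLp.equiv 2 (Fin 3 → ℝ)).symm
    ![u 1 * v 2 - u 2 * v 1, u 2 * v 0 - u 0 * v 2, u 0 * v 1 - u 1 * v 0]

/-- Curl of a vector field on `ℝ³`. -/
def curl3 (A : EuclideanSpace ℝ (Fin 3) → EuclideanSpace ℝ (Fin 3))
    (x : EuclideanSpace ℝ (Fin 3)) : EuclideanSpace ℝ (Fin 3) :=
  (WithLp.equiv 2 (Fin 3 → ℝ)).symm
    ![fderiv ℝ A x (EuclideanSpace.single 1 1) 2 - fderiv ℝ A x (EuclideanSpace.single 2 1) 1,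
      fderiv ℝ A x (EuclideanSpace.single 2 1) 0 - fderiv ℝ A x (EuclideanSpace.single 0 1) 2,
      fderiv ℝ A x (EuclideanSpace.single 0 1) 1 - fderiv ℝ A x (EuclideanSpace.single 1 1) 0]

/-!
Let `M` be the maximum of `|p|`, attained at `t₀` in the direction `u`. By periodicity of `q`, the
component `p·u` vanishes at some `t₁ ∈ (t₀, t₀ + T)`. The force consists of an electric part of
magnitude at most `2C` and a magnetic part, orthogonal to `p`, of magnitude at most `2C|q̇|`.
Integrating `ṗ` directly would lose a factor through the magnetic part. Instead one uses a barrier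
`W(p)` with `W(Mu) = M` and `W = 0` on `p·u = 0` which, while `p·u > 0`, decreases at rate at most
`2C (1 + u·q̇ / v)`, where `v = M / √(1 + M²)` is the maximal speed. The barrier involves the length
of the component of `p` orthogonal to `u`, which has a kink on the axis, so only right derivatives
are used. Hence `M ≤ 2C (t₁ - t₀ + u·(q(t₁) - q(t₀)) / v)`, and the time-reversed motion gives
`M ≤ 2C (t₀ + T - t₁ + u·(q(t₀ + T) - q(t₁)) / v)`. In the sum the displacements cancel, so
`M ≤ TC`; the velocity bound follows since the speed is an increasing function of `|p|`.
-/

open Set RealInnerProductSpace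

section RightDerivative

lemma le_of_forall_exists_hasDerivWithinAt_nonneg {f : ℝ → ℝ} {a b : ℝ} (hab : a ≤ b)
    (hf : ContinuousOn f (Icc a b))
    (hf' : ∀ t ∈ Ico a b, ∃ d, 0 ≤ d ∧ HasDerivWithinAt f d (Ici t) t) : f a ≤ f b := by
  choose! f' hf'_nonneg hf' using hf'
  exact image_le_of_deriv_right_le_deriv_boundary continuousOn_const
    (fun t _ => hasDerivWithinAt_const t _ (f a)) le_rfl hf hf' hf'_nonneg (right_mem_Icc.2 hab)

lemma hasDerivWithinAt_norm_of_eq_zero {E : Type*} [NormedAddCommGroup E] [NormedSpace ℝ E]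
    {f : ℝ → E} {f' : E} {t : ℝ} (hf : HasDerivWithinAt f f' (Ici t) t) (h₀ : f t = 0) :
    HasDerivWithinAt (fun s => ‖f s‖) ‖f'‖ (Ici t) t := by
  rw [← hasDerivWithinAt_Ioi_iff_Ici, hasDerivWithinAt_iff_tendsto_slope' self_notMem_Ioi] at hf ⊢
  refine hf.norm.congr' (eventually_nhdsWithin_of_forall fun s hs => ?_)
  simp only [slope_def_module, h₀, sub_zero, norm_zero, norm_smul, norm_inv, smul_eq_mul,
    Real.norm_of_nonneg (sub_nonneg.2 (le_of_lt hs))]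

variable {E : Type*} [NormedAddCommGroup E] [InnerProductSpace ℝ E]

lemma hasDerivAt_norm_of_ne_zero {f : ℝ → E} {f' : E} {t : ℝ} (hf : HasDerivAt f f' t)
    (h₀ : f t ≠ 0) : HasDerivAt (fun s => ‖f s‖) ⟪‖f t‖⁻¹ • f t, f'⟫ t := by
  have hsqrt := hf.norm_sq.sqrt (by positivity)
  simp only [Real.sqrt_sq (norm_nonneg _)] at hsqrt
  refine hsqrt.congr_deriv ?_
  rw [real_inner_smul_left]
  field_simp

lemma exists_hasDerivWithinAt_norm {f : ℝ → E} {f' : E} {t : ℝ} (hf : HasDerivAt f f' t) :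
    ∃ n : E, ‖n‖ ≤ 1 ∧ ⟪n, f t⟫ = ‖f t‖ ∧
      HasDerivWithinAt (fun s => ‖f s‖) ⟪n, f'⟫ (Ici t) t := by
  have hunit (v : E) : ‖‖v‖⁻¹ • v‖ ≤ 1 := by
    rw [norm_smul, norm_inv, norm_norm]; exact inv_mul_le_one
  have hinner (v : E) : ⟪‖v‖⁻¹ • v, v⟫ = ‖v‖ := by
    rw [real_inner_smul_left, real_inner_self_eq_norm_sq, sq, ← mul_assoc, inv_mul_mul_self]
  by_cases h₀ : f t = 0
  · exact ⟨‖f'‖⁻¹ • f', hunit f', by simp [h₀],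
      (hinner f').symm ▸ hasDerivWithinAt_norm_of_eq_zero hf.hasDerivWithinAt h₀⟩
  · exact ⟨‖f t‖⁻¹ • f t, hunit _, hinner _, (hasDerivAt_norm_of_ne_zero hf h₀).hasDerivWithinAt⟩

end RightDerivative

-- The left side is convex in `m` (`hconvex`), so the cases `m = 0` (`hzero`) and `m = 1` (`hone`)
-- suffice.
lemma barrier_slope_le {c s m : ℝ} (hc : 0 ≤ c) (hs : 0 ≤ s)
    (hcs : c ^ 2 + s ^ 2 = 1) (hm₀ : 0 ≤ m) (hm₁ : m ≤ 1) :
    (5 + m * (1 + c - s)) * (√(3 + 2 * (c - s)) + m * (c + s)) ≤ 12 * (1 + m * c) := by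
  have hs₁ : s ≤ 1 := by nlinarith
  have hc₁ : c ≤ 1 := by nlinarith
  set R := √(3 + 2 * (c - s))
  have hR : R ^ 2 = 3 + 2 * (c - s) := Real.sq_sqrt (by linarith)
  have hR₀ : 0 ≤ R := Real.sqrt_nonneg _
  have hzero : R ≤ 12 / 5 := by nlinarith
  have hsum : c + s ≤ 3 / 2 := by nlinarith [sq_nonneg (c - s)]
  have hone : (c - s) * (R + (c + s)) ≤ 3 * (R - 1) ^ 2 := by
    rcases le_total (c - s) 0 with hd | hd
    · nlinarith [mul_nonneg (neg_nonneg.2 hd) (add_nonneg hR₀ (add_nonneg hc hs))]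
    · have : 1 ≤ R := by nlinarith
      calc (c - s) * (R + (c + s)) ≤ (c - s) * (R + 3 / 2) := by gcongr
        _ ≤ 3 * (R - 1) ^ 2 := by nlinarith
  have hconvex : 0 ≤ m * (1 - m) * ((1 + c - s) * (c + s)) :=
    mul_nonneg (mul_nonneg hm₀ (by linarith)) (mul_nonneg (by linarith) (by linarith))
  linear_combination hconvex + (1 - m) * 5 * hzero + m * hone + 3 * m * hR

section UnitVectors

variable {E : Type*} [NormedAddCommGroup E] [InnerProductSpace ℝ E] {u n ν b : E}

lemma norm_add_sub_le_sqrt (hν : ‖ν‖ = 1) (hu : ‖u‖ = 1) (hn : ‖n‖ ≤ 1) (hun : ⟪u, n⟫ = 0) :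
    ‖ν + u - n‖ ≤ √(3 + 2 * (⟪u, ν⟫ - ⟪n, ν⟫)) := by
  refine Real.le_sqrt_of_sq_le ?_
  rw [norm_sub_sq_real, norm_add_sq_real, inner_add_left, real_inner_comm, real_inner_comm n ν,
    hν, hu, hun]
  nlinarith [norm_nonneg n]

lemma abs_inner_add_sub_le_of_inner_eq_zero (hν : ‖ν‖ = 1) (hu : ‖u‖ = 1) (hn : ‖n‖ ≤ 1)
    (hun : ⟪u, n⟫ = 0) (hsum : 0 ≤ ⟪u, ν⟫ + ⟪n, ν⟫)
    (hcs : ⟪u, ν⟫ ^ 2 + ⟪n, ν⟫ ^ 2 = 1) (hb : ⟪b, ν⟫ = 0) :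
    |⟪ν + u - n, b⟫| ≤ (⟪u, ν⟫ + ⟪n, ν⟫) * ‖b‖ := by
  set c := ⟪u, ν⟫
  set s := ⟪n, ν⟫
  have htangent : ⟪ν + u - n, b⟫ = ⟪u - n - (c - s) • ν, b⟫ := by
    simp only [inner_add_left, inner_sub_left, real_inner_smul_left, real_inner_comm b ν, hb]
    ring
  have hnorm : ‖u - n - (c - s) • ν‖ ≤ c + s := by
    refine le_of_sq_le_sq ?_ hsum
    have hproj : ‖u - n - (c - s) • ν‖ ^ 2 = ‖u - n‖ ^ 2 - (c - s) ^ 2 := by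
      rw [norm_sub_sq_real, real_inner_smul_right, inner_sub_left, norm_smul, hν, mul_one,
        Real.norm_eq_abs, sq_abs]
      ring
    rw [hproj, norm_sub_sq_real, hu, hun]
    nlinarith [norm_nonneg n]
  rw [htangent]
  exact (abs_real_inner_le_norm _ _).trans (by gcongr)

end UnitVectors

section Barrier

variable {E : Type*} [NormedAddCommGroup E] [InnerProductSpace ℝ E] {u n ν e b : E} {F κ m M : ℝ}

lemma barrier_deriv_add_budget_deriv_nonneg (hν : ‖ν‖ = 1) (hu : ‖u‖ = 1) (hn : ‖n‖ ≤ 1)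
    (hun : ⟪u, n⟫ = 0) (hc : 0 ≤ ⟪u, ν⟫) (hs : 0 ≤ ⟪n, ν⟫) (hcs : ⟪u, ν⟫ ^ 2 + ⟪n, ν⟫ ^ 2 = 1)
    (he : ‖e‖ ≤ F) (hb : ‖b‖ ≤ F * m) (hbν : ⟪b, ν⟫ = 0) (hm₀ : 0 ≤ m) (hm₁ : m ≤ 1)
    (hκ₀ : 0 ≤ κ) (hκ : κ ≤ 5 + m * (1 + ⟪u, ν⟫ - ⟪n, ν⟫)) :
    0 ≤ κ / 12 * ⟪ν + u - n, e + b⟫ + F * (1 + m * ⟪u, ν⟫) := by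
  have hF : 0 ≤ F := (norm_nonneg e).trans he
  have hG := norm_add_sub_le_sqrt hν hu hn hun
  have hGb := abs_inner_add_sub_le_of_inner_eq_zero hν hu hn hun (add_nonneg hc hs) hcs hbν
  have hslope := barrier_slope_le hc hs hcs hm₀ hm₁
  set c := ⟪u, ν⟫
  set s := ⟪n, ν⟫
  set R := √(3 + 2 * (c - s))
  have hcost₀ : 0 ≤ R + m * (c + s) := by positivity
  have hforce : -(F * (R + m * (c + s))) ≤ ⟪ν + u - n, e + b⟫ := by
    have hGe : |⟪ν + u - n, e⟫| ≤ R * F := (abs_real_inner_le_norm _ _).trans (by gcongr)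
    have hGb' : |⟪ν + u - n, b⟫| ≤ (c + s) * (F * m) := hGb.trans (by gcongr)
    rw [inner_add_right]
    linarith [neg_le_of_abs_le hGe, neg_le_of_abs_le hGb']
  have hcost : κ * (F * (R + m * (c + s))) ≤ 12 * (F * (1 + m * c)) :=
    calc κ * (F * (R + m * (c + s)))
        ≤ (5 + m * (1 + c - s)) * (F * (R + m * (c + s))) :=
          mul_le_mul_of_nonneg_right hκ (mul_nonneg hF hcost₀)
      _ = F * ((5 + m * (1 + c - s)) * (R + m * (c + s))) := by ring
      _ ≤ F * (12 * (1 + m * c)) := by gcongr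
      _ = 12 * (F * (1 + m * c)) := by ring
  linarith [mul_le_mul_of_nonneg_left hforce hκ₀]

/-- The quantity `|P| + P·u - |P⊥|`, where `P⊥` is the component of `P` orthogonal to `u`. For a
unit vector `u` it equals `2M` at `P = M • u` and vanishes on the hyperplane orthogonal to `u`. -/
def axialExcess (u P : E) : ℝ := ‖P‖ + ⟪u, P⟫ - ‖(ℝ ∙ u)ᗮ.starProjection P‖

/-- The barrier function measuring how far a momentum of length at most `M` is from the hyperplane
orthogonal to the unit vector `u`. It equals `M` at `M • u`; the quadratic term makes its slope grow
with the speed, which balances the displacement term of `momentumBudget`. -/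
def momentumBarrier (M : ℝ) (u P : E) : ℝ :=
  (10 * axialExcess u P + axialExcess u P ^ 2 / M) / 24

lemma continuous_axialExcess (u : E) : Continuous (axialExcess u) := by
  unfold axialExcess
  fun_prop

lemma continuous_momentumBarrier (M : ℝ) (u : E) : Continuous (momentumBarrier M u) := by
  have := continuous_axialExcess u
  unfold momentumBarrier
  fun_prop

lemma norm_sq_eq_inner_sq_add_norm_sq_starProjection (hu : ‖u‖ = 1) (P : E) :
    ‖P‖ ^ 2 = ⟪u, P⟫ ^ 2 + ‖(ℝ ∙ u)ᗮ.starProjection P‖ ^ 2 := by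
  rw [(ℝ ∙ u).norm_sq_eq_add_norm_sq_starProjection P,
    Submodule.starProjection_unit_singleton ℝ hu, norm_smul, hu, mul_one, Real.norm_eq_abs, sq_abs]

lemma axialExcess_nonneg {P : E} (hP : 0 ≤ ⟪u, P⟫) : 0 ≤ axialExcess u P := by
  have := (ℝ ∙ u)ᗮ.norm_starProjection_apply_le P
  unfold axialExcess
  linarith

lemma axialExcess_smul {r : ℝ} (hr : 0 ≤ r) (u P : E) :
    axialExcess u (r • P) = r * axialExcess u P := by
  simp only [axialExcess, map_smul, norm_smul, real_inner_smul_right, Real.norm_of_nonneg hr]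
  ring

lemma axialExcess_self (hu : ‖u‖ = 1) : axialExcess u u = 2 := by
  rw [axialExcess, Submodule.starProjection_orthogonalComplement_singleton_eq_zero,
    real_inner_self_eq_norm_sq, hu, norm_zero]
  norm_num

lemma momentumBarrier_smul_self (hu : ‖u‖ = 1) (hM : 0 < M) : momentumBarrier M u (M • u) = M := by
  rw [momentumBarrier, axialExcess_smul hM.le, axialExcess_self hu]
  field_simp
  ring

lemma momentumBarrier_eq_zero_of_inner_eq_zero {P : E} (hP : ⟪u, P⟫ = 0) :
    momentumBarrier M u P = 0 := by
  have hproj : (ℝ ∙ u)ᗮ.starProjection P = P :=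
    Submodule.starProjection_eq_self_iff.2 (Submodule.mem_orthogonal_singleton_iff_inner_right.2 hP)
  simp [momentumBarrier, axialExcess, hproj, hP]

lemma exists_hasDerivWithinAt_axialExcess {P : ℝ → E} {P' : E} {t : ℝ} (hP : HasDerivAt P P' t)
    (h₀ : P t ≠ 0) (u : E) :
    ∃ n : E, ‖n‖ ≤ 1 ∧ ⟪u, n⟫ = 0 ∧
      ⟪n, ‖P t‖⁻¹ • P t⟫ = ‖(ℝ ∙ u)ᗮ.starProjection (‖P t‖⁻¹ • P t)‖ ∧
      HasDerivWithinAt (fun s => axialExcess u (P s)) ⟪‖P t‖⁻¹ • P t + u - n, P'⟫ (Ici t) t := by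
  set π := (ℝ ∙ u)ᗮ.starProjection
  have hπ (v w : E) : ⟪π v, w⟫ = ⟪v, π w⟫ := Submodule.starProjection_isSymmetric _ v w
  obtain ⟨n, hn, hnP, hnderiv⟩ :=
    exists_hasDerivWithinAt_norm (π.hasFDerivAt.comp_hasDerivAt t hP)
  refine ⟨π n, (Submodule.norm_starProjection_apply_le _ n).trans hn,
    Submodule.mem_orthogonal_singleton_iff_inner_right.1 (Submodule.starProjection_apply_mem _ n),
    ?_, ?_⟩
  · rw [hπ, map_smul, real_inner_smul_right, norm_smul, norm_inv, norm_norm]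
    exact congrArg _ hnP
  · have hinner : HasDerivAt (fun s => ⟪u, P s⟫) ⟪u, P'⟫ t := by
      simpa using (hasDerivAt_const t u).inner ℝ hP
    refine (((hasDerivAt_norm_of_ne_zero hP h₀).fun_add hinner).hasDerivWithinAt.fun_sub
      hnderiv).congr_deriv ?_
    rw [inner_sub_left, inner_add_left, hπ n]

end Barrier

/-- The speed of a relativistic particle of unit mass with momentum of length `r`. -/
def relSpeed (r : ℝ) : ℝ := r / √(1 + r ^ 2)

lemma relSpeed_strictMono : StrictMono relSpeed := by
  have hsin : relSpeed = fun r => Real.sin (Real.arctan r) :=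
    funext fun r => (Real.sin_arctan r).symm
  exact hsin ▸ Real.sin_arctan_strictMono

lemma relSpeed_pos {r : ℝ} (hr : 0 < r) : 0 < relSpeed r :=
  div_pos hr (by positivity)

lemma relSpeed_nonneg {r : ℝ} (hr : 0 ≤ r) : 0 ≤ relSpeed r :=
  div_nonneg hr (Real.sqrt_nonneg _)

lemma relSpeed_lt_one (r : ℝ) : relSpeed r < 1 := by
  rw [relSpeed, div_lt_one (by positivity)]
  exact Real.lt_sqrt_of_sq_lt (by linarith)

lemma div_le_relSpeed_div_relSpeed {r M : ℝ} (hr : 0 ≤ r) (hM : 0 < M) (hrM : r ≤ M) :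
    r / M ≤ relSpeed r / relSpeed M := by
  have hratio : relSpeed r / relSpeed M = r / M * (√(1 + M ^ 2) / √(1 + r ^ 2)) := by
    simp only [relSpeed]
    field_simp
  rw [hratio]
  refine le_mul_of_one_le_right (by positivity) ((one_le_div (by positivity)).2 ?_)
  gcongr

lemma relSpeed_div_relSpeed_mem_Icc {r M : ℝ} (hr : 0 ≤ r) (hM : 0 < M) (hrM : r ≤ M) :
    relSpeed r / relSpeed M ∈ Icc 0 1 :=
  ⟨div_nonneg (relSpeed_nonneg hr) (relSpeed_pos hM).le,
    (div_le_one (relSpeed_pos hM)).2 (relSpeed_strictMono.monotone hrM)⟩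

section Motion

variable {E : Type*} [NormedAddCommGroup E] [InnerProductSpace ℝ E]

lemma norm_inv_sqrt_smul_eq_relSpeed (p : E) : ‖(√(1 + ‖p‖ ^ 2))⁻¹ • p‖ = relSpeed ‖p‖ := by
  rw [norm_smul, norm_inv, Real.norm_of_nonneg (Real.sqrt_nonneg _), inv_mul_eq_div, relSpeed]

lemma axialExcess_div_le {u P : E} {M : ℝ} (hM : 0 < M) (hPM : ‖P‖ ≤ M) (hP : 0 ≤ ⟪u, P⟫) :
    axialExcess u P / M ≤ relSpeed ‖P‖ / relSpeed M * axialExcess u (‖P‖⁻¹ • P) := by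
  have hG : 0 ≤ axialExcess u (‖P‖⁻¹ • P) :=
    axialExcess_nonneg (by rw [real_inner_smul_right]; positivity)
  calc axialExcess u P / M = axialExcess u (‖P‖ • ‖P‖⁻¹ • P) / M := by
        rcases eq_or_ne P 0 with rfl | h₀
        · simp only [smul_zero]
        · rw [smul_inv_smul₀ (norm_ne_zero_iff.2 h₀)]
    _ = ‖P‖ / M * axialExcess u (‖P‖⁻¹ • P) := by
        rw [axialExcess_smul (norm_nonneg P), mul_div_right_comm]
    _ ≤ relSpeed ‖P‖ / relSpeed M * axialExcess u (‖P‖⁻¹ • P) :=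
        mul_le_mul_of_nonneg_right (div_le_relSpeed_div_relSpeed (norm_nonneg P) hM hPM) hG

/-- A relativistic motion with position `Q` and momentum `P` under an electric force `e` of
magnitude at most `F` and a magnetic force `b`, orthogonal to the momentum and of magnitude at
most `F` times the speed. -/
structure IsLorentzMotion (F : ℝ) (Q P e b : ℝ → E) : Prop where
  hasDerivAt_position : ∀ t, HasDerivAt Q ((√(1 + ‖P t‖ ^ 2))⁻¹ • P t) t
  hasDerivAt_momentum : ∀ t, HasDerivAt P (e t + b t) t
  norm_electric_le : ∀ t, ‖e t‖ ≤ F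
  norm_magnetic_le : ∀ t, ‖b t‖ ≤ F * relSpeed ‖P t‖
  inner_magnetic_momentum : ∀ t, ⟪b t, P t⟫ = 0

/-- The clock against which the loss of barrier is measured: elapsed time, corrected by the
displacement along `u` in units of the maximal speed `relSpeed M`, and scaled by the force
bound `F`. -/
def momentumBudget (F M : ℝ) (u : E) (Q : ℝ → E) (t : ℝ) : ℝ :=
  F * (t + ⟪u, Q t⟫ / relSpeed M)

namespace IsLorentzMotion

variable {F M : ℝ} {Q P e b : ℝ → E} {u : E}

lemma force_bound_nonneg (h : IsLorentzMotion F Q P e b) : 0 ≤ F :=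
  (norm_nonneg _).trans (h.norm_electric_le 0)

lemma continuous_momentum (h : IsLorentzMotion F Q P e b) : Continuous P :=
  continuous_iff_continuousAt.2 fun t => (h.hasDerivAt_momentum t).continuousAt

lemma timeReversal (h : IsLorentzMotion F Q P e b) :
    IsLorentzMotion F (fun t => -Q (-t)) (fun t => P (-t)) (fun t => -e (-t))
      (fun t => -b (-t)) where
  hasDerivAt_position t :=
    ((h.hasDerivAt_position (-t)).scomp t (hasDerivAt_neg t)).neg.congr_deriv (by module)
  hasDerivAt_momentum t :=
    ((h.hasDerivAt_momentum (-t)).scomp t (hasDerivAt_neg t)).congr_deriv (by module)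
  norm_electric_le t := by simpa only [norm_neg] using h.norm_electric_le (-t)
  norm_magnetic_le t := by simpa only [norm_neg] using h.norm_magnetic_le (-t)
  inner_magnetic_momentum t := by
    simpa only [inner_neg_left, neg_eq_zero] using h.inner_magnetic_momentum (-t)

lemma hasDerivAt_inner_position (h : IsLorentzMotion F Q P e b) (u : E) (t : ℝ) :
    HasDerivAt (fun s => ⟪u, Q s⟫) ((√(1 + ‖P t‖ ^ 2))⁻¹ * ⟪u, P t⟫) t := by
  simpa [real_inner_smul_right] using (hasDerivAt_const t u).inner ℝ (h.hasDerivAt_position t)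

lemma hasDerivAt_momentumBudget (h : IsLorentzMotion F Q P e b) (M : ℝ) (u : E) (t : ℝ) :
    HasDerivAt (momentumBudget F M u Q)
      (F * (1 + relSpeed ‖P t‖ / relSpeed M * ⟪u, ‖P t‖⁻¹ • P t⟫)) t := by
  refine (((hasDerivAt_id t).fun_add
    ((h.hasDerivAt_inner_position u t).div_const (relSpeed M))).const_mul F).congr_deriv ?_
  rw [real_inner_smul_right]
  rcases eq_or_ne (P t) 0 with h₀ | h₀
  · simp [h₀]
  · have : ‖P t‖ ≠ 0 := norm_ne_zero_iff.2 h₀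
    simp only [relSpeed]
    field_simp

lemma monotone_momentumBudget (h : IsLorentzMotion F Q P e b) (hu : ‖u‖ = 1) (hM : 0 < M)
    (hPM : ∀ t, ‖P t‖ ≤ M) : Monotone (momentumBudget F M u Q) := by
  refine monotone_of_hasDerivAt_nonneg (h.hasDerivAt_momentumBudget M u) fun t =>
    mul_nonneg h.force_bound_nonneg ?_
  have hcos : |⟪u, ‖P t‖⁻¹ • P t⟫| ≤ 1 := by
    refine (abs_real_inner_le_norm _ _).trans ?_
    rw [hu, one_mul, norm_smul, norm_inv, norm_norm]
    exact inv_mul_le_one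
  obtain ⟨hratio₀, hratio₁⟩ := relSpeed_div_relSpeed_mem_Icc (norm_nonneg _) hM (hPM t)
  have hprod : |relSpeed ‖P t‖ / relSpeed M * ⟪u, ‖P t‖⁻¹ • P t⟫| ≤ 1 := by
    rw [abs_mul, abs_of_nonneg hratio₀]
    exact mul_le_one₀ hratio₁ (abs_nonneg _) hcos
  linarith [neg_le_of_abs_le hprod]

lemma norm_magnetic_le_speed_ratio (h : IsLorentzMotion F Q P e b) (hM : 0 < M) (t : ℝ) :
    ‖b t‖ ≤ F * (relSpeed ‖P t‖ / relSpeed M) :=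
  (h.norm_magnetic_le t).trans <| mul_le_mul_of_nonneg_left
    (le_div_self (relSpeed_nonneg (norm_nonneg _)) (relSpeed_pos hM) (relSpeed_lt_one M).le)
    h.force_bound_nonneg

lemma exists_hasDerivWithinAt_barrier_add_budget (h : IsLorentzMotion F Q P e b) (hu : ‖u‖ = 1)
    (hM : 0 < M) {t : ℝ} (hPM : ‖P t‖ ≤ M) (hpos : 0 < ⟪u, P t⟫) :
    ∃ d, 0 ≤ d ∧ HasDerivWithinAt
      (fun s => momentumBarrier M u (P s) + momentumBudget F M u Q s) d (Ici t) t := by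
  have h₀ : P t ≠ 0 := fun h₀ => by simp [h₀] at hpos
  obtain ⟨n, hn, hun, hnν, hderiv⟩ :=
    exists_hasDerivWithinAt_axialExcess (h.hasDerivAt_momentum t) h₀ u
  have hκ := axialExcess_div_le hM hPM hpos.le
  have hb := h.norm_magnetic_le_speed_ratio hM t
  have hbudget := h.hasDerivAt_momentumBudget M u t
  obtain ⟨hm₀, hm₁⟩ := relSpeed_div_relSpeed_mem_Icc (norm_nonneg _) hM hPM
  set ν := ‖P t‖⁻¹ • P t
  set m := relSpeed ‖P t‖ / relSpeed M
  have hν : ‖ν‖ = 1 := norm_smul_inv_norm (𝕜 := ℝ) h₀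
  have hc : 0 ≤ ⟪u, ν⟫ := by rw [real_inner_smul_right]; positivity
  have hs : 0 ≤ ⟪n, ν⟫ := hnν ▸ norm_nonneg _
  have hcs : ⟪u, ν⟫ ^ 2 + ⟪n, ν⟫ ^ 2 = 1 := by
    rw [hnν, ← norm_sq_eq_inner_sq_add_norm_sq_starProjection hu, hν, one_pow]
  have hbν : ⟪b t, ν⟫ = 0 := by
    rw [real_inner_smul_right, h.inner_magnetic_momentum, mul_zero]
  rw [axialExcess.eq_1 u ν, hν, ← hnν, ← add_le_add_iff_left 5] at hκ
  have hκ₀ : 0 ≤ 5 + axialExcess u (P t) / M := by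
    have := axialExcess_nonneg hpos.le
    positivity
  refine ⟨_, barrier_deriv_add_budget_deriv_nonneg hν hu hn hun hc hs hcs (h.norm_electric_le t)
    hb hbν hm₀ hm₁ hκ₀ hκ, ?_⟩
  refine ((((hderiv.const_mul 10).fun_add ((hderiv.fun_pow 2).div_const M)).div_const
    24).fun_add hbudget.hasDerivWithinAt).congr_deriv ?_
  push_cast
  ring

lemma le_momentumBudget_sub (h : IsLorentzMotion F Q P e b) (hu : ‖u‖ = 1) (hM : 0 < M)
    (hPM : ∀ t, ‖P t‖ ≤ M) {t₀ t₁ : ℝ} (h₀₁ : t₀ ≤ t₁) (h₀ : P t₀ = M • u)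
    (h₁ : ⟪u, P t₁⟫ = 0) :
    M ≤ momentumBudget F M u Q t₁ - momentumBudget F M u Q t₀ := by
  have hinner : Continuous fun t => ⟪u, P t⟫ := continuous_const.inner h.continuous_momentum
  have hinner₀ : 0 < ⟪u, P t₀⟫ := by
    rwa [h₀, real_inner_smul_right, real_inner_self_eq_norm_sq, hu, one_pow, mul_one]
  -- The barrier estimate holds up to the first zero `τ`; afterwards the budget can only grow.
  obtain ⟨τ, ⟨⟨h₀τ, hτ₁⟩, hτ⟩, hfirst⟩ :=
    (isCompact_Icc.inter_right (isClosed_singleton.preimage hinner)).exists_isLeast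
      ⟨t₁, right_mem_Icc.2 h₀₁, h₁⟩
  have hpos : ∀ t ∈ Ico t₀ τ, 0 < ⟪u, P t⟫ := by
    intro t ht
    by_contra! hneg
    obtain ⟨z, hz, hz₀⟩ := intermediate_value_Icc' ht.1 hinner.continuousOn ⟨hneg, hinner₀.le⟩
    exact (hz.2.trans_lt ht.2).not_ge (hfirst ⟨⟨hz.1, (hz.2.trans ht.2.le).trans hτ₁⟩, hz₀⟩)
  have hbudget : Continuous (momentumBudget F M u Q) := continuous_iff_continuousAt.2 fun t =>
    (h.hasDerivAt_momentumBudget M u t).continuousAt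
  have hgain := le_of_forall_exists_hasDerivWithinAt_nonneg h₀τ
    (((continuous_momentumBarrier M u).comp h.continuous_momentum).add hbudget).continuousOn
    fun t ht => h.exists_hasDerivWithinAt_barrier_add_budget hu hM (hPM t) (hpos t ht)
  simp only [Pi.add_apply, Function.comp_apply] at hgain
  rw [h₀, momentumBarrier_smul_self hu hM, momentumBarrier_eq_zero_of_inner_eq_zero hτ] at hgain
  linarith [h.monotone_momentumBudget hu hM hPM hτ₁]

lemma two_mul_le_of_periodic (h : IsLorentzMotion F Q P e b) {T : ℝ} (hT : 0 < T)
    (hQ : Function.Periodic Q T) (hP : Function.Periodic P T) (hu : ‖u‖ = 1) (hM : 0 < M)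
    (hPM : ∀ t, ‖P t‖ ≤ M) {t₀ : ℝ} (h₀ : P t₀ = M • u) : 2 * M ≤ F * T := by
  obtain ⟨t₁, ⟨h₀₁, h₁T⟩, hturn⟩ := exists_hasDerivAt_eq_zero (lt_add_of_pos_right t₀ hT)
    (fun t _ => (h.hasDerivAt_inner_position u t).continuousAt.continuousWithinAt)
    (by simp only [hQ t₀]) fun t _ => h.hasDerivAt_inner_position u t
  have h₁ : ⟪u, P t₁⟫ = 0 := (mul_eq_zero.1 hturn).resolve_left (by positivity)
  have hforward := h.le_momentumBudget_sub hu hM hPM h₀₁.le h₀ h₁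
  have hbackward := h.timeReversal.le_momentumBudget_sub hu hM (fun t => hPM (-t))
    (neg_le_neg h₁T.le) (by rw [neg_neg, hP, h₀]) (by rwa [neg_neg])
  -- By periodicity the displacement terms of the two estimates cancel in the sum.
  simp only [momentumBudget, neg_neg, hQ t₀, inner_neg_right] at hforward hbackward
  linear_combination hforward + hbackward

lemma norm_momentum_le (h : IsLorentzMotion F Q P e b) {T : ℝ} (hT : 0 < T)
    (hQ : Function.Periodic Q T) (hP : Function.Periodic P T) (t : ℝ) : ‖P t‖ ≤ F * T / 2 := by
  obtain ⟨t₀, -, ht₀⟩ := isCompact_Icc.exists_isMaxOn (nonempty_Icc.2 hT.le)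
    (h.continuous_momentum.norm.continuousOn (s := Icc 0 T))
  have hmax (s : ℝ) : ‖P s‖ ≤ ‖P t₀‖ := by
    obtain ⟨s', hs', hPs⟩ := hP.exists_mem_Ico₀ hT s
    exact hPs ▸ ht₀ (Ico_subset_Icc_self hs')
  refine (hmax t).trans ?_
  rcases eq_or_ne (P t₀) 0 with h₀ | h₀
  · have := h.force_bound_nonneg
    rw [h₀, norm_zero]
    positivity
  · have hdir : P t₀ = ‖P t₀‖ • ‖P t₀‖⁻¹ • P t₀ := (smul_inv_smul₀ (norm_ne_zero_iff.2 h₀) _).symm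
    linarith [h.two_mul_le_of_periodic hT hQ hP (norm_smul_inv_norm (𝕜 := ℝ) h₀)
      (norm_pos_iff.2 h₀) hmax hdir]

end IsLorentzMotion

end Motion

section Electromagnetic

lemma norm_adjoint_sub_le {E : Type*} [NormedAddCommGroup E] [InnerProductSpace ℝ E]
    [CompleteSpace E] (L : E →L[ℝ] E) (v : E) :
    ‖ContinuousLinearMap.adjoint L v - L v‖ ≤ 2 * ‖L‖ * ‖v‖ :=
  calc ‖ContinuousLinearMap.adjoint L v - L v‖
      ≤ ‖ContinuousLinearMap.adjoint L v‖ + ‖L v‖ := norm_sub_le _ _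
    _ ≤ ‖ContinuousLinearMap.adjoint L‖ * ‖v‖ + ‖L‖ * ‖v‖ :=
        add_le_add (ContinuousLinearMap.le_opNorm _ v) (L.le_opNorm v)
    _ = 2 * ‖L‖ * ‖v‖ := by rw [LinearIsometryEquiv.norm_map]; ring

lemma inner_cross3_smul_self (a : ℝ) (u v : EuclideanSpace ℝ (Fin 3)) :
    ⟪cross3 (a • u) v, u⟫ = 0 := by
  simp only [cross3, WithLp.equiv_symm_apply, PiLp.inner_apply, PiLp.smul_apply, smul_eq_mul,
    RCLike.inner_apply, Real.ringHom_apply, Fin.sum_univ_three, Matrix.cons_val]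
  ring

lemma map_eq_sum_smul_map_single {ι E : Type*} [Fintype ι] [DecidableEq ι]
    [NormedAddCommGroup E] [NormedSpace ℝ E] (L : EuclideanSpace ℝ ι →L[ℝ] E)
    (v : EuclideanSpace ℝ ι) : L v = ∑ j, v j • L (EuclideanSpace.single j 1) := by
  conv_lhs => rw [← (EuclideanSpace.basisFun ι ℝ).sum_repr v]
  simp

lemma adjoint_apply_eq_sum {ι κ : Type*} [Fintype ι] [DecidableEq ι] [Fintype κ]
    (L : EuclideanSpace ℝ ι →L[ℝ] EuclideanSpace ℝ κ) (v : EuclideanSpace ℝ κ) (i : ι) :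
    ContinuousLinearMap.adjoint L v i = ∑ j, v j * L (EuclideanSpace.single i 1) j := by
  have hcoord := ContinuousLinearMap.adjoint_inner_right L (EuclideanSpace.single i (1 : ℝ)) v
  rw [EuclideanSpace.inner_single_left] at hcoord
  simpa [PiLp.inner_apply] using hcoord

lemma cross3_curl3 (A : EuclideanSpace ℝ (Fin 3) → EuclideanSpace ℝ (Fin 3))
    (x v : EuclideanSpace ℝ (Fin 3)) :
    cross3 v (curl3 A x) =
      ContinuousLinearMap.adjoint (fderiv ℝ A x) v - fderiv ℝ A x v := by
  ext i
  rw [PiLp.sub_apply, adjoint_apply_eq_sum, map_eq_sum_smul_map_single (fderiv ℝ A x) v]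
  fin_cases i <;>
    simp only [cross3, curl3, WithLp.equiv_symm_apply, Matrix.cons_val, Fin.zero_eta, Fin.mk_one,
      Fin.reduceFinMk, Fin.sum_univ_three, PiLp.add_apply, PiLp.smul_apply, smul_eq_mul] <;>
    ring

lemma norm_cross3_curl3_le (A : EuclideanSpace ℝ (Fin 3) → EuclideanSpace ℝ (Fin 3))
    (x v : EuclideanSpace ℝ (Fin 3)) :
    ‖cross3 v (curl3 A x)‖ ≤ 2 * ‖fderiv ℝ A x‖ * ‖v‖ :=
  cross3_curl3 A x v ▸ norm_adjoint_sub_le _ _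

end Electromagnetic

/-- Every `T`-periodic solution of the relativistic Hamiltonian system associated with the
Lorentz force equation satisfies the uniform velocity bound `|q̇| ≤ TC/√(1+T²C²) < 1`. -/
theorem stmt11 (T : ℝ) (hT : 0 < T)
    (A : ℝ → EuclideanSpace ℝ (Fin 3) → EuclideanSpace ℝ (Fin 3))
    (Φ : ℝ → EuclideanSpace ℝ (Fin 3) → ℝ)
    (hA : ContDiff ℝ 1 fun p : ℝ × EuclideanSpace ℝ (Fin 3) => A p.1 p.2)
    (hΦ : ∀ t, Differentiable ℝ (Φ t))
    (C : ℝ)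
    (hC₁ : ∀ t x, ‖deriv (fun s => A s x) t‖ ≤ C)
    (hC₂ : ∀ t x, ‖fderiv ℝ (A t) x‖ ≤ C)
    (hC₃ : ∀ t x, ‖gradient (Φ t) x‖ ≤ C)
    (q p : ℝ → EuclideanSpace ℝ (Fin 3))
    (hqper : Function.Periodic q T) (hpper : Function.Periodic p T)
    (hqd : Differentiable ℝ q) (hpd : Differentiable ℝ p)
    (heq1 : ∀ t, deriv q t = (Real.sqrt (1 + ‖p t‖ ^ 2))⁻¹ • p t)
    (heq2 : ∀ t, deriv p t =
      -gradient (Φ t) (q t) - deriv (fun s => A s (q t)) t +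
        cross3 (deriv q t) (curl3 (A t) (q t))) :
    (∀ t, ‖deriv q t‖ ≤ T * C / Real.sqrt (1 + T ^ 2 * C ^ 2)) ∧
      T * C / Real.sqrt (1 + T ^ 2 * C ^ 2) < 1 := by
  have hmotion : IsLorentzMotion (2 * C) q p
      (fun t => -gradient (Φ t) (q t) - deriv (fun s => A s (q t)) t)
      (fun t => cross3 (deriv q t) (curl3 (A t) (q t))) :=
    { hasDerivAt_position := fun t => heq1 t ▸ (hqd t).hasDerivAt
      hasDerivAt_momentum := fun t => heq2 t ▸ (hpd t).hasDerivAt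
      norm_electric_le := fun t => by
        rw [neg_sub_left, norm_neg, two_mul]
        exact norm_add_le_of_le (hC₁ t (q t)) (hC₃ t (q t))
      norm_magnetic_le := fun t => by
        rw [← norm_inv_sqrt_smul_eq_relSpeed, ← heq1]
        refine (norm_cross3_curl3_le _ _ _).trans ?_
        gcongr
        exact hC₂ t (q t)
      inner_magnetic_momentum := fun t => by
        rw [heq1]
        exact inner_cross3_smul_self _ _ _ }
  rw [← mul_pow]
  refine ⟨fun t => ?_, relSpeed_lt_one (T * C)⟩
  rw [heq1, norm_inv_sqrt_smul_eq_relSpeed]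
  refine relSpeed_strictMono.monotone ?_
  linarith [hmotion.norm_momentum_le hT hqper hpper t]

end
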